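/- Let m ≥ 1 and let R be a commutative ring in which (m−1)! is invertible. If B ∈ Mat_m(R) has characteristic polynomial (X−1)^m, then for every natural number q the matrix B^q also has characteristic polynomial (X−1)^m and log(B^q) = q·log(B), where log denotes the truncated logarithm. -/

import Mathlib

open Polynomial

/-- The truncated logarithm of a matrix: `log(B) = ∑_{i=1}^{m-1} (-1)^{i+1} (B-1)^i / i`. -/
noncomputable def truncLog {R : Type*} [CommRing R] {m : ℕ}
    (B : Matrix (Fin m) (Fin m) R) : Matrix (Fin m) (Fin m) R :=
  ∑ i ∈ Finset.Ico 1 m, ((-1 : R) ^ (i + 1) * Ring.inverse ((i : R))) • (B - 1) ^ i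

/-!
If `charpoly B = ∏ (X - aᵢ)`, then `det (p(B)) = ∏ p(aᵢ)` for every polynomial `p`: for `p` a
product of linear factors this is the multiplicativity of the determinant, a monic `p` splits over
some extension of `R`, and an arbitrary `p` becomes monic on adding a multiple of `charpoly B`,
which changes neither side. Taking `p = T - f` over `R[T]` gives
`charpoly (f(B)) = ∏ (X - f(aᵢ))`.

For the logarithm, let `L` be the truncated series of `log (1 + X)`. Modulo `X ^ (m - 1)`, the
derivative of `L(p - 1)` is the logarithmic derivative `p' / p`, for every polynomial `p` with
`p ≡ 1 mod X`. The latter is additive in `p`, and as `1, …, m - 1` are units, integrating shows that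
`p ↦ L(p - 1)` turns products into sums modulo `X ^ m`. Applied to the powers of `1 + X` and
evaluated at `X = B - 1`, where `X ^ m` vanishes by Cayley-Hamilton, this is the claim.
-/

section Charpoly

variable {R n : Type*} [CommRing R] [Fintype n] [DecidableEq n] {B : Matrix n n R} {a : n → R}

theorem map_aeval_matrix {S : Type*} [CommRing S] (f : R →+* S) (B : Matrix n n R) (p : R[X]) :
    (aeval B p).map f = aeval (B.map f) (p.map f) := by
  refine p.map_aeval_eq_aeval_map (φ := f) (ψ := f.mapMatrix) ?_ B
  ext r i j
  simp [Matrix.algebraMap_matrix_apply, apply_ite f]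

theorem charpoly_map_eq_prod {S : Type*} [CommRing S] (f : R →+* S)
    (hB : B.charpoly = ∏ i, (X - C (a i))) :
    (B.map f).charpoly = ∏ i, (X - C (f (a i))) := by
  simp [Matrix.charpoly_map, hB, Polynomial.map_prod]

theorem det_add_algebraMap_of_charpoly_eq_prod (hB : B.charpoly = ∏ i, (X - C (a i))) (r : R) :
    (B + algebraMap R _ r).det = ∏ i, (a i + r) := by
  have hneg : B + algebraMap R _ r = -(Matrix.scalar n (-r) - B) := by
    rw [Matrix.algebraMap_eq_diagonal, map_neg, neg_sub, sub_neg_eq_add]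
    rfl
  calc (B + algebraMap R _ r).det = (-1) ^ Fintype.card n * B.charpoly.eval (-r) := by
        rw [hneg, Matrix.det_neg, Matrix.eval_charpoly]
    _ = ∏ i, -(-r - a i) := by
        rw [Finset.prod_neg, hB, eval_prod, Finset.card_univ]
        simp only [eval_sub, eval_X, eval_C]
    _ = ∏ i, (a i + r) := by simp

theorem det_aeval_of_charpoly_eq_prod_of_splits (hB : B.charpoly = ∏ i, (X - C (a i)))
    {p : R[X]} (hp : p.Splits) : (aeval B p).det = ∏ i, p.eval (a i) := by
  induction hp using Submonoid.closure_induction with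
  | mem p hp =>
    rcases hp with ⟨r, rfl⟩ | ⟨r, rfl⟩
    · simp [Matrix.algebraMap_eq_diagonal]
    · simpa using det_add_algebraMap_of_charpoly_eq_prod hB r
  | one => simp
  | mul p q _ _ hp hq => simp [hp, hq, Finset.prod_mul_distrib]

theorem det_aeval_of_charpoly_eq_prod_of_monic (hB : B.charpoly = ∏ i, (X - C (a i)))
    {p : R[X]} (hp : p.Monic) : (aeval B p).det = ∏ i, p.eval (a i) := by
  nontriviality R
  obtain ⟨S, _, _, _, _, _, hS⟩ := hp.exists_splits_map
  apply FaithfulSMul.algebraMap_injective R S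
  calc algebraMap R S (aeval B p).det
      = (aeval (B.map (algebraMap R S)) (p.map (algebraMap R S))).det := by
        rw [← map_aeval_matrix, RingHom.map_det, RingHom.mapMatrix_apply]
    _ = ∏ i, (p.map (algebraMap R S)).eval (algebraMap R S (a i)) :=
        det_aeval_of_charpoly_eq_prod_of_splits (charpoly_map_eq_prod _ hB) hS
    _ = algebraMap R S (∏ i, p.eval (a i)) := by simp only [eval_map_apply, map_prod]

theorem det_aeval_of_charpoly_eq_prod (hB : B.charpoly = ∏ i, (X - C (a i))) (p : R[X]) :
    (aeval B p).det = ∏ i, p.eval (a i) := by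
  nontriviality R
  set q : R[X] := B.charpoly * X ^ (p.natDegree + 1) with hq
  have hq_monic : q.Monic := B.charpoly_monic.mul (monic_X_pow _)
  have hdeg : p.degree < q.degree := by
    apply degree_lt_degree
    rw [hq, natDegree_mul_X_pow _ B.charpoly_monic.ne_zero]
    lia
  have hq_aeval : aeval B q = 0 := by simp [hq, Matrix.aeval_self_charpoly]
  have hq_eval (i : n) : q.eval (a i) = 0 := by
    simp [hq, hB, eval_prod, Finset.prod_eq_zero (Finset.mem_univ i)]
  simpa [hq_aeval, hq_eval] using
    det_aeval_of_charpoly_eq_prod_of_monic hB (hq_monic.add_of_right hdeg)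

theorem charpoly_aeval_of_charpoly_eq_prod (hB : B.charpoly = ∏ i, (X - C (a i))) (p : R[X]) :
    (aeval B p).charpoly = ∏ i, (X - C (p.eval (a i))) := by
  have hchar : (aeval B p).charmatrix = aeval (B.map C) (C X - p.map C) := by
    rw [Matrix.charmatrix, RingHom.mapMatrix_apply, map_aeval_matrix, map_sub, aeval_C,
      Matrix.algebraMap_eq_diagonal]
    rfl
  rw [Matrix.charpoly, hchar, det_aeval_of_charpoly_eq_prod (charpoly_map_eq_prod C hB)]
  simp [eval_map_apply]

end Charpoly

section TruncLogPoly

variable {R : Type*} [CommRing R] {m : ℕ}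

variable (R m) in
/-- The truncated power series `∑_{i=1}^{m-1} (-1)^{i+1} X^i / i` of `log (1 + X)`; the truncated
logarithm of `a` is its value at `a - 1`. As in `truncLog`, `1 / i` stands for `Ring.inverse i`,
which is `0` when `i` is not a unit of `R`. -/
noncomputable def truncLogPoly : R[X] :=
  ∑ i ∈ Finset.Ico 1 m, C ((-1 : R) ^ (i + 1) * Ring.inverse (i : R)) * X ^ i

theorem aeval_truncLogPoly (B : Matrix (Fin m) (Fin m) R) :
    aeval (B - 1) (truncLogPoly R m) = truncLog B := by
  simp [truncLogPoly, truncLog, Algebra.smul_def]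

variable (R m) in
theorem X_dvd_truncLogPoly : X ∣ truncLogPoly R m :=
  Finset.dvd_sum fun _ hi ↦
    (dvd_pow_self X (Nat.one_le_iff_ne_zero.mp (Finset.mem_Ico.mp hi).1)).mul_left _

variable (m) in
theorem X_dvd_truncLogPoly_comp {p : R[X]} (hp : X ∣ p) :
    X ∣ (truncLogPoly R m).comp p := by
  obtain ⟨l, hl⟩ := X_dvd_truncLogPoly R m
  rw [hl, mul_comp, X_comp]
  exact hp.mul_right _

theorem isUnit_natCast_of_isUnit_factorial {k i : ℕ} (hk : IsUnit (k.factorial : R))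
    (hi : i ≠ 0) (hik : i ≤ k) : IsUnit (i : R) :=
  isUnit_of_dvd_unit (Nat.cast_dvd_cast (Nat.dvd_factorial hi.bot_lt hik)) hk

theorem derivative_truncLogPoly (hfac : IsUnit ((m - 1).factorial : R)) :
    derivative (truncLogPoly R m) = ∑ j ∈ Finset.range (m - 1), (-X) ^ j := by
  rw [truncLogPoly, Finset.sum_Ico_eq_sum_range, derivative_sum]
  refine Finset.sum_congr rfl fun j hj ↦ ?_
  have hunit : IsUnit ((1 + j : ℕ) : R) :=
    isUnit_natCast_of_isUnit_factorial hfac (by lia) (by grind)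
  rw [derivative_C_mul_X_pow, mul_assoc, Ring.inverse_mul_cancel _ hunit, neg_pow (X : R[X]) j]
  simp [pow_add]

theorem one_add_X_mul_derivative_truncLogPoly (hfac : IsUnit ((m - 1).factorial : R)) :
    (1 + X) * derivative (truncLogPoly R m) = 1 - (-X) ^ (m - 1) := by
  rw [derivative_truncLogPoly hfac, ← mul_neg_geom_sum, sub_neg_eq_add]

theorem X_pow_dvd_of_X_pow_sub_one_dvd_derivative (hfac : IsUnit ((m - 1).factorial : R))
    {p : R[X]} (hp : X ∣ p) (hp' : X ^ (m - 1) ∣ derivative p) : X ^ m ∣ p := by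
  rw [X_pow_dvd_iff] at hp' ⊢
  rintro (_ | d) hd
  · exact X_dvd_iff.mp hp
  · have hcoeff := hp' d (by lia)
    have hunit : IsUnit ((d + 1 : ℕ) : R) :=
      isUnit_natCast_of_isUnit_factorial hfac (by lia) (by lia)
    rw [coeff_derivative, ← Nat.cast_succ] at hcoeff
    exact hunit.mul_left_eq_zero.mp hcoeff

theorem X_pow_dvd_mul_derivative_truncLogPoly_comp_sub (hfac : IsUnit ((m - 1).factorial : R))
    {p : R[X]} (hp : X ∣ p - 1) :
    X ^ (m - 1) ∣ p * derivative ((truncLogPoly R m).comp (p - 1)) - derivative p := by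
  have hcomp : p * (derivative (truncLogPoly R m)).comp (p - 1) = 1 - (-(p - 1)) ^ (m - 1) := by
    simpa using congrArg (·.comp (p - 1)) (one_add_X_mul_derivative_truncLogPoly hfac)
  have hremainder : p * derivative ((truncLogPoly R m).comp (p - 1)) - derivative p
      = -derivative p * (-(p - 1)) ^ (m - 1) := by
    rw [derivative_comp, derivative_sub, derivative_one]
    linear_combination derivative p * hcomp
  rw [hremainder]
  exact (pow_dvd_pow_of_dvd (hp.neg_right) _).mul_left _

theorem X_pow_dvd_truncLogPoly_comp_mul_sub (hfac : IsUnit ((m - 1).factorial : R))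
    {p q : R[X]} (hp : X ∣ p - 1) (hq : X ∣ q - 1) :
    X ^ m ∣ (truncLogPoly R m).comp (p * q - 1)
      - ((truncLogPoly R m).comp (p - 1) + (truncLogPoly R m).comp (q - 1)) := by
  have hpq : X ∣ p * q - 1 := by
    rw [show p * q - 1 = p * (q - 1) + (p - 1) by ring]
    exact (hq.mul_left p).add hp
  have hcoprime : IsCoprime (X ^ (m - 1)) (p * q) := by
    obtain ⟨r, hr⟩ := hpq
    exact IsCoprime.pow_left ⟨-r, 1, by linear_combination hr⟩
  refine X_pow_dvd_of_X_pow_sub_one_dvd_derivative hfac ?_ (hcoprime.dvd_of_dvd_mul_left ?_)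
  · exact (X_dvd_truncLogPoly_comp m hpq).sub
      ((X_dvd_truncLogPoly_comp m hp).add (X_dvd_truncLogPoly_comp m hq))
  · have hlogDeriv {f : R[X]} (hf : X ∣ f - 1) :=
      X_pow_dvd_mul_derivative_truncLogPoly_comp_sub hfac hf
    convert (hlogDeriv hpq).sub (((hlogDeriv hp).mul_left q).add ((hlogDeriv hq).mul_left p))
      using 1
    rw [derivative_sub, derivative_add, derivative_mul]
    ring

theorem X_pow_dvd_truncLogPoly_comp_pow_sub (hfac : IsUnit ((m - 1).factorial : R))
    {p : R[X]} (hp : X ∣ p - 1) (k : ℕ) :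
    X ^ m ∣ (truncLogPoly R m).comp (p ^ k - 1) - k • (truncLogPoly R m).comp (p - 1) := by
  induction k with
  | zero =>
    have hL : (truncLogPoly R m).eval 0 = 0 := by
      rw [← coeff_zero_eq_eval_zero, X_dvd_iff.mp (X_dvd_truncLogPoly R m)]
    simp [hL]
  | succ k ih =>
    have hpk : X ∣ p ^ k - 1 := hp.trans (sub_one_dvd_pow_sub_one p k)
    convert (X_pow_dvd_truncLogPoly_comp_mul_sub hfac hpk hp).add ih using 1
    rw [pow_succ, succ_nsmul]
    ring

theorem aeval_pow_sub_one_truncLogPoly {A : Type*} [Ring A] [Algebra R A]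
    (hfac : IsUnit ((m - 1).factorial : R)) {a : A} (ha : (a - 1) ^ m = 0) (k : ℕ) :
    aeval (a ^ k - 1) (truncLogPoly R m) = k • aeval (a - 1) (truncLogPoly R m) := by
  obtain ⟨r, hr⟩ := X_pow_dvd_truncLogPoly_comp_pow_sub hfac (p := 1 + X) (by simp) k
  simpa [aeval_comp, ha, sub_eq_zero] using congrArg (aeval (a - 1)) hr

end TruncLogPoly

/-- Let `m ≥ 1` and let `R` be a commutative ring in which `(m−1)!` is invertible.
If `B ∈ Mat_m(R)` has characteristic polynomial `(X−1)^m`, then for every natural number `q`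
the matrix `B^q` also has characteristic polynomial `(X−1)^m` and `log(B^q) = q·log(B)`,
where `log` denotes the truncated logarithm. -/
theorem truncLog_pow {R : Type*} [CommRing R] {m : ℕ} (hm : 1 ≤ m)
    (hfac : IsUnit (((m - 1).factorial : R)))
    (B : Matrix (Fin m) (Fin m) R) (hB : B.charpoly = (X - 1) ^ m) (q : ℕ) :
    (B ^ q).charpoly = (X - 1) ^ m ∧ truncLog (B ^ q) = q • truncLog B := by
  have hprod : B.charpoly = ∏ _i : Fin m, (X - C 1) := by simpa using hB
  have hnil : (B - 1) ^ m = 0 := by simpa [hB] using B.aeval_self_charpoly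
  constructor
  · simpa using charpoly_aeval_of_charpoly_eq_prod hprod (X ^ q)
  · simpa only [aeval_truncLogPoly] using aeval_pow_sub_one_truncLogPoly hfac hnil q
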